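/- For every prime p, every integer N ≥ 2, and every β ∈ ℂ with Re(β) > −2/N, the integral Z_N(ℤ_p, β) converges absolutely and Z_N(ℤ_p, β) = N! · p^{(1/2)·(N(N−1)/2)·β} · F_N(log p, β). -/

import Mathlib

open MeasureTheory
open scoped LinearAlgebra.Projectivization

namespace LogCoulomb

noncomputable section

/-! ### The projective line over `ℚ_p`, its spherical metric and `PGL₂`-invariant measure -/

variable (p : ℕ) [Fact p.Prime]

instance : MeasurableSpace ℚ_[p] := borel _
instance : BorelSpace ℚ_[p] := ⟨rfl⟩

/-- The projective line over `ℚ_p`. -/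
abbrev P1 := ℙ ℚ_[p] (Fin 2 → ℚ_[p])

instance : TopologicalSpace (P1 p) :=
  inferInstanceAs (TopologicalSpace (Quotient _))

instance : MeasurableSpace (P1 p) := borel _
instance : BorelSpace (P1 p) := ⟨rfl⟩

/-- Spherical distance on homogeneous coordinates:
`δ((x₀,x₁),(y₀,y₁)) = |x₀y₁ - x₁y₀| / (max(|x₀|,|x₁|) ⬝ max(|y₀|,|y₁|))`. -/
def sdelta (x y : Fin 2 → ℚ_[p]) : ℝ :=
  ‖x 0 * y 1 - x 1 * y 0‖ / (max ‖x 0‖ ‖x 1‖ * max ‖y 0‖ ‖y 1‖)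

/-- The spherical metric on `ℙ¹(ℚ_p)`, defined via the canonical representatives. -/
def pdelta (ξ η : P1 p) : ℝ := sdelta p ξ.rep η.rep

open Classical in
/-- The action of a matrix on `ℙ¹(ℚ_p)`: `[x₀:x₁] ↦ [a x₀ + b x₁ : c x₀ + d x₁]`
(well-defined, and given by the first branch of the `if`, whenever `A` is invertible). -/
def mobius (A : Matrix (Fin 2) (Fin 2) ℚ_[p]) (ξ : P1 p) : P1 p :=
  if h : A.mulVec ξ.rep ≠ 0 then Projectivization.mk ℚ_[p] (A.mulVec ξ.rep) h else ξ

/-- `ν` is invariant under the action of `GL₂(ℤ_p)` on `ℙ¹(ℚ_p)`; membership of the matrix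
entries in `ℤ_p`, and invertibility of the matrix over `ℤ_p`, are phrased via the `p`-adic
norm on `ℚ_p`. -/
def IsGLInvariant (ν : Measure (P1 p)) : Prop :=
  ∀ A : Matrix (Fin 2) (Fin 2) ℚ_[p],
    (∀ i j, ‖A i j‖ ≤ 1) → ‖A.det‖ = 1 →
      ∀ M : Set (P1 p), MeasurableSet M → ν (mobius p A '' M) = ν M

/-- The embedding `ι : ℚ_p → ℙ¹(ℚ_p)`, `x ↦ [x : 1]`. -/
def iota (x : ℚ_[p]) : P1 p :=
  Projectivization.mk ℚ_[p] ![x, 1] (by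
    intro h
    have h1 := congrFun h 1
    simp at h1)

/-! ### Canonical partition functions -/

/-- The pairs `(i,j)` with `i < j`. -/
def pairs (N : ℕ) : Finset (Fin N × Fin N) := Finset.univ.filter fun q => q.1 < q.2

/-- The closed unit ball `ℤ_p = R` inside `ℚ_p`. -/
def Zball : Set ℚ_[p] := {x | ‖x‖ ≤ 1}

/-- The open unit ball `pℤ_p = P` inside `ℚ_p`. -/
def Pball : Set ℚ_[p] := {x | ‖x‖ < 1}

/-- The one-component canonical partition function
`Z_N(X, β) = ∫_{X^N} ∏_{i<j} |x_i - x_j|^β dμ^N` (as a Bochner integral, whether or not it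
converges absolutely). -/
def ZN (μ : Measure ℚ_[p]) [SigmaFinite μ] (X : Set ℚ_[p]) (N : ℕ) (β : ℂ) : ℂ :=
  ∫ x : Fin N → ℚ_[p], ∏ q ∈ pairs N, (‖x q.1 - x q.2‖ : ℂ) ^ β
    ∂(Measure.pi fun _ => μ.restrict X)

/-- The multivariate canonical partition function
`𝒵_I(X, s) = ∫_{X^I} ∏_{i<j, i,j ∈ I} |x_i - x_j|^{s_{ij}} dμ^I` for a subset `I ⊆ [N]`. -/
def ZI (μ : Measure ℚ_[p]) [SigmaFinite μ] (X : Set ℚ_[p]) {N : ℕ} (I : Finset (Fin N))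
    (s : Fin N → Fin N → ℂ) : ℂ :=
  ∫ x : I → ℚ_[p],
    ∏ q ∈ Finset.univ.filter (fun q : (↥I) × (↥I) => (q.1 : Fin N) < (q.2 : Fin N)),
      (‖x q.1 - x q.2‖ : ℂ) ^ s q.1.1 q.2.1
    ∂(Measure.pi fun _ => μ.restrict X)

/-- The multivariate canonical partition function
`𝒵_N(ℙ¹(ℚ_p), s) = ∫_{(ℙ¹(ℚ_p))^N} ∏_{i<j} δ(ξ_i,ξ_j)^{s_{ij}} dν^N`. -/
def ZP1s (ν : Measure (P1 p)) [SigmaFinite ν] (N : ℕ) (s : Fin N → Fin N → ℂ) : ℂ :=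
  ∫ x : Fin N → P1 p, ∏ q ∈ pairs N, ((pdelta p (x q.1) (x q.2) : ℝ) : ℂ) ^ s q.1 q.2
    ∂(Measure.pi fun _ => ν)

/-- The one-component canonical partition function `Z_N(ℙ¹(ℚ_p), β)`. -/
def ZP1 (ν : Measure (P1 p)) [SigmaFinite ν] (N : ℕ) (β : ℂ) : ℂ :=
  ∫ x : Fin N → P1 p, ∏ q ∈ pairs N, ((pdelta p (x q.1) (x q.2) : ℝ) : ℂ) ^ β
    ∂(Measure.pi fun _ => ν)

/-! ### The quadratic recurrence -/

/-- The factor `ρ_{N,k}(t,β)` appearing in the quadratic recurrence; here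
`N.choose 2 = N(N-1)/2`. -/
def rho (N k : ℕ) (t : ℝ) (β : ℂ) : ℂ :=
  if t = 0 then
    (((N : ℂ) + (N.choose 2 : ℂ) * β) * (1 - 2 * (k : ℂ) / (N : ℂ)) + 1) /
      (((N : ℂ) + (N.choose 2 : ℂ) * β) - 1)
  else
    Complex.sinh (((t : ℂ) / 2) * (((N : ℂ) + (N.choose 2 : ℂ) * β) * (1 - 2 * (k : ℂ) / (N : ℂ)) + 1)) /
      Complex.sinh (((t : ℂ) / 2) * (((N : ℂ) + (N.choose 2 : ℂ) * β) - 1))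

/-- The quadratic recurrence: `F 0 = F 1 = 1` and
`F N t β = ∑_{k=1}^{N-1} (k/N) ρ_{N,k}(t,β) F_{N-k}(t,β) F_k(t,β)` for `N ≥ 2`. -/
def F : ℕ → ℝ → ℂ → ℂ
  | 0, _, _ => 1
  | 1, _, _ => 1
  | N + 2, t, β =>
    ∑ k ∈ (Finset.Icc 1 (N + 1)).attach,
      (((k : ℕ) : ℂ) / ((N : ℂ) + 2)) * rho (N + 2) k t β *
        F (N + 2 - (k : ℕ)) t β * F (k : ℕ) t β
  decreasing_by
  all_goals
    have hk := Finset.mem_Icc.mp k.2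
    omega

/-! ### Splitting chains -/

/-- A splitting chain `Λ_0 > Λ_1 > ⋯ > Λ_L` of set partitions of the subset `I ⊆ [N]`,
beginning with the trivial partition `{I}` and ending with the partition of `I` into
singletons.  (The values `Λ ℓ` for `ℓ > L` are required to be `∅`, so that a chain is
determined by the genuine data `Λ_0, …, Λ_L`.) -/
structure SplChain (N : ℕ) (I : Finset (Fin N)) where
  L : ℕ
  Λ : ℕ → Finset (Finset (Fin N))
  nonempty_mem : ∀ ℓ ≤ L, ∀ B ∈ Λ ℓ, B.Nonempty
  subset_mem : ∀ ℓ ≤ L, ∀ B ∈ Λ ℓ, B ⊆ I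
  cover : ∀ ℓ ≤ L, ∀ i ∈ I, ∃! B, B ∈ Λ ℓ ∧ i ∈ B
  first : Λ 0 = {I}
  last : Λ L = I.image fun i => {i}
  refines : ∀ ℓ < L, ∀ B ∈ Λ (ℓ + 1), ∃ C ∈ Λ ℓ, B ⊆ C
  strict : ∀ ℓ < L, Λ (ℓ + 1) ≠ Λ ℓ
  trailing : ∀ ℓ, L < ℓ → Λ ℓ = ∅

variable {N : ℕ} {I : Finset (Fin N)}

/-- The branches of a splitting chain: the non-singleton parts,
`ℬ(𝔖) = (Λ_0 ∪ ⋯ ∪ Λ_{L-1}) \ Λ_L`. -/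
def SplChain.branches (S : SplChain N I) : Finset (Finset (Fin N)) :=
  ((Finset.range S.L).biUnion S.Λ) \ S.Λ S.L

/-- The depth `ℓ_𝔖(λ) = max {ℓ : λ ∈ Λ_ℓ}` of a branch. -/
def SplChain.depth (S : SplChain N I) (lam : Finset (Fin N)) : ℕ :=
  ((Finset.range (S.L + 1)).filter fun ℓ => lam ∈ S.Λ ℓ).sup id

/-- The degree `deg_𝔖(λ) = #{λ' ∈ Λ_{ℓ_𝔖(λ)+1} : λ' ⊆ λ}` of a branch. -/
def SplChain.degree (S : SplChain N I) (lam : Finset (Fin N)) : ℕ :=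
  ((S.Λ (S.depth lam + 1)).filter fun lam' => lam' ⊆ lam).card

/-- A splitting chain is reduced if every branch appears in exactly one partition of the
chain (namely the one at its depth). -/
def SplChain.Reduced (S : SplChain N I) : Prop :=
  ∀ lam ∈ S.branches, ∀ ℓ ≤ S.L, (lam ∈ S.Λ ℓ ↔ ℓ = S.depth lam)

/-- `e_λ(s) = #λ - 1 + ∑_{i<j, i,j ∈ λ} s_{ij}`. -/
def eexp (lam : Finset (Fin N)) (s : Fin N → Fin N → ℂ) : ℂ :=
  (lam.card : ℂ) - 1 + ∑ q ∈ (pairs N).filter fun q => q.1 ∈ lam ∧ q.2 ∈ lam, s q.1 q.2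

/-- Membership in `Ω_I`: `Re e_λ(s) > 0` for every `λ ⊆ I` with `#λ > 1`. -/
def InOmega (I : Finset (Fin N)) (s : Fin N → Fin N → ℂ) : Prop :=
  ∀ lam ⊆ I, 1 < lam.card → 0 < (eexp lam s).re


/-- The multivariate canonical partition function `𝒵_N(ℤ_p, s)` over `Fin N`-indexed tuples. -/
def ZNs (μ : Measure ℚ_[p]) [SigmaFinite μ] (X : Set ℚ_[p]) (N : ℕ)
    (s : Fin N → Fin N → ℂ) : ℂ :=
  ∫ x : Fin N → ℚ_[p], ∏ q ∈ pairs N, (‖x q.1 - x q.2‖ : ℂ) ^ s q.1 q.2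
    ∂(Measure.pi fun _ => μ.restrict X)

/-- The ball `p^v ℤ_p = {x : |x| ≤ p^{-v}}` in `ℚ_p`. -/
def pvball (v : ℤ) : Set ℚ_[p] := {x | ‖x‖ ≤ (p : ℝ) ^ (-v)}

/-- `G_N(q,β) = N! q^{(1/2)(N choose 2)β} F_N(log q, β)`. -/
def GN (N : ℕ) (β : ℂ) (q : ℝ) : ℂ :=
  (N.factorial : ℂ) * (q : ℂ) ^ ((N.choose 2 : ℂ) * β / 2) * F N (Real.log q) β

/-- `H_N(q,β)`, the efficient formula for `Z_N(ℙ¹(K),β)` as a function of `q`. -/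
def HN (N : ℕ) (β : ℂ) (q : ℝ) : ℂ :=
  (N.factorial : ℂ) * ∑ k ∈ Finset.range (N + 1),
    Complex.cosh (((Real.log q : ℂ) / 2) * ((N : ℂ) + (N.choose 2 : ℂ) * β) *
          (1 - 2 * (k : ℂ) / (N : ℂ))) /
        (2 * Complex.cosh ((Real.log q : ℂ) / 2)) ^ N *
      F (N - k) (Real.log q) β * F k (Real.log q) β

end

section
variable (p : ℕ) [hp : Fact p.Prime]

/-- open unit ball around a -/
def DD (a : ℕ) : Set ℚ_[p] := {x | ‖x - a‖ < 1}

lemma DD_open (a : ℕ) : IsOpen (DD p a) := by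
  have : DD p a = Metric.ball (a:ℚ_[p]) 1 := by ext x; simp [DD, dist_eq_norm]
  rw [this]; exact Metric.isOpen_ball

lemma norm_nat_sub {a k : ℕ} (ha : a < p) (hk : k < p) (h : a ≠ k) :
    ‖(a : ℚ_[p]) - k‖ = 1 := by
  have h1 : ‖(((a:ℤ) - k : ℤ) : ℚ_[p])‖ ≤ 1 := Padic.norm_int_le_one _
  have h2 : ¬ ‖(((a:ℤ) - k : ℤ) : ℚ_[p])‖ < 1 := by
    rw [Padic.norm_intCast_lt_one_iff]
    intro hd
    have := Int.eq_zero_of_abs_lt_dvd hd (by rw [abs_lt]; constructor <;> omega)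
    omega
  push_cast at h1 h2
  linarith

lemma norm_of_DD {a k : ℕ} (ha : a < p) (hk : k < p) (h : a ≠ k) {x y : ℚ_[p]}
    (hx : x ∈ DD p a) (hy : y ∈ DD p k) : ‖x - y‖ = 1 := by
  have e : x - y = ((x - a) - (y - k)) + ((a:ℚ_[p]) - k) := by ring
  have h1 := norm_nat_sub p ha hk h
  have h2 : ‖(x - a) - (y - k)‖ < 1 := by
    rw [sub_eq_add_neg]
    refine (Padic.nonarchimedean _ _).trans_lt (max_lt hx ?_)
    rw [norm_neg]; exact hy
  rw [e, Padic.add_eq_max_of_ne (by rw [h1]; exact h2.ne), h1, max_eq_right h2.le]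

lemma DD_disj {a k : ℕ} (ha : a < p) (hk : k < p) (h : a ≠ k) : Disjoint (DD p a) (DD p k) := by
  rw [Set.disjoint_left]
  intro x hx hy
  have := norm_of_DD p ha hk h hx hy
  simp at this

lemma DD_cover {x : ℚ_[p]} (hx : x ∈ Zball p) : ∃ a < p, x ∈ DD p a := by
  obtain ⟨z, rfl⟩ : ∃ z : ℤ_[p], (z : ℚ_[p]) = x := ⟨⟨x, hx⟩, rfl⟩
  obtain ⟨n, hn, h⟩ := PadicInt.exists_mem_range z
  refine ⟨n, hn, ?_⟩
  rw [PadicInt.maximalIdeal_eq_span_p, Ideal.mem_span_singleton, ← PadicInt.norm_lt_one_iff_dvd] at h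
  rw [PadicInt.norm_def] at h
  rw [PadicInt.coe_sub, PadicInt.coe_natCast] at h
  exact h

lemma DD_sub (a : ℕ) : DD p a ⊆ Zball p := by
  intro x hx
  have e : x = (x - a) + a := by ring
  change ‖x‖ ≤ 1
  rw [e]
  have h1 : ‖(a : ℚ_[p])‖ ≤ 1 := by exact_mod_cast Padic.norm_int_le_one (p := p) (a : ℤ)
  exact (Padic.nonarchimedean _ _).trans (max_le (le_of_lt hx) h1)

lemma Zball_eq : Zball p = ⋃ a ∈ Finset.range p, DD p a := by
  ext x
  simp only [Set.mem_iUnion, Finset.mem_range, exists_prop]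
  exact ⟨DD_cover p, fun ⟨a, _, h⟩ => DD_sub p a h⟩

lemma mem_DD_iff (a : ℕ) (y : ℚ_[p]) : (a : ℚ_[p]) + p * y ∈ DD p a ↔ y ∈ Zball p := by
  have hp1 : (1:ℝ) < p := by exact_mod_cast hp.out.one_lt
  have : ‖(a:ℚ_[p]) + p * y - a‖ = (p:ℝ)⁻¹ * ‖y‖ := by
    rw [add_sub_cancel_left, norm_mul, Padic.norm_p]
  simp only [DD, Zball, Set.mem_ofPred_eq, this]
  constructor
  · intro h
    have h2 : ‖y‖ < (p:ℝ)^(1:ℤ) := by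
      rw [inv_mul_lt_iff₀ (by linarith)] at h; simpa using h
    have := (Padic.norm_lt_pow_iff_norm_le_pow_sub_one y 1).1 h2
    simpa using this
  · intro h
    rw [inv_mul_lt_iff₀ (by linarith)]; linarith

variable (μ : Measure ℚ_[p]) [μ.IsAddHaarMeasure]

lemma mu_DD (hμ : μ (Zball p) = 1) (a : ℕ) : (p : ENNReal) * μ (DD p a) = 1 := by
  have h0 : ∀ k, μ (DD p k) = μ (DD p 0) := by
    intro k
    rw [← measure_preimage_add μ (k:ℚ_[p]) (DD p k)]
    congr 1
    ext x; simp [DD]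
  rw [h0]
  rw [← hμ, Zball_eq, measure_biUnion_finset]
  · simp [h0]
  · intro i hi j hj hij
    exact DD_disj p (by simpa using hi) (by simpa using hj) hij
  · intro i _; exact (DD_open p i).measurableSet

lemma map_T (hμ : μ (Zball p) = 1) (a : ℕ) :
    (μ.restrict (Zball p)).map (fun y => (a:ℚ_[p]) + p * y) = (p : ENNReal) • (μ.restrict (Zball p)).restrict (DD p a) := by
  have hp0 : (p:ℚ_[p]) ≠ 0 := by exact_mod_cast hp.out.ne_zero
  have hm : Measure.IsAddHaarMeasure (μ.map (fun y => (p:ℚ_[p]) * y)) := by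
    have := AddEquiv.isAddHaarMeasure_map μ
      (LinearEquiv.smulOfUnit (M := ℚ_[p]) (Units.mk0 (p:ℚ_[p]) hp0)).toAddEquiv
      (continuous_const_smul (p:ℚ_[p]))
      (continuous_const_smul ((Units.mk0 (p:ℚ_[p]) hp0)⁻¹ : (ℚ_[p])ˣ))
    exact this
  have hmeas : Measurable (fun y : ℚ_[p] => (p:ℚ_[p]) * y) := (continuous_const_mul _).measurable
  have hmeas2 : Measurable (fun y : ℚ_[p] => (a:ℚ_[p]) + p * y) := by
    have : Continuous (fun y : ℚ_[p] => (a:ℚ_[p]) + p * y) := by fun_prop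
    exact this.measurable
  have h1 : μ.map (fun y => (a:ℚ_[p]) + p * y) = μ.map (fun y => (p:ℚ_[p]) * y) := by
    conv_rhs => rw [← map_add_left_eq_self (μ.map (fun y => (p:ℚ_[p]) * y)) (a:ℚ_[p])]
    rw [Measure.map_map (measurable_const_add _) hmeas]
    rfl
  have h2 := Measure.isAddLeftInvariant_eq_smul (μ.map (fun y => (p:ℚ_[p]) * y)) μ
  set c := Measure.addHaarScalarFactor (μ.map (fun y => (p:ℚ_[p]) * y)) μ
  have hD : MeasurableSet (DD p a) := (DD_open p a).measurableSet
  have hpre : (fun y : ℚ_[p] => (a:ℚ_[p]) + p * y) ⁻¹' DD p a = Zball p := by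
    ext y; exact mem_DD_iff p a y
  have hc : (c : ENNReal) = p := by
    have h3 : (μ.map (fun y => (a:ℚ_[p]) + p * y)) (DD p a) = 1 := by
      rw [Measure.map_apply hmeas2 hD, hpre, hμ]
    rw [h1, h2, Measure.smul_apply, ENNReal.smul_def, smul_eq_mul] at h3
    have h4 := mu_DD p μ hμ a
    have h5 : μ (DD p a) ≠ 0 := by intro h; rw [h] at h4; simp at h4
    have h6 : μ (DD p a) ≠ ⊤ := by
      intro h; rw [h] at h4
      simp [hp.out.ne_zero] at h4
    exact (ENNReal.mul_left_inj h5 h6).1 (h3.trans h4.symm)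
  rw [Measure.restrict_restrict hD, Set.inter_eq_left.2 (DD_sub p a), ← hpre,
    ← Measure.restrict_map hmeas2 hD, h1, h2, Measure.restrict_smul, ← hc]
  rfl
end

section
variable (p : ℕ) [hp : Fact p.Prime]

open Classical in
/-- symmetric pair product -/
noncomputable def GG (ψ : ℝ → ℂ) {ι : Type} [Fintype ι] (x : ι → ℚ_[p]) : ℂ :=
  ∏ i, ∏ j, if i = j then 1 else ψ ‖x i - x j‖

variable {p}
lemma GG_meas {ψ : ℝ → ℂ} (hψ : Measurable ψ) {ι : Type} [Fintype ι] :
    Measurable (GG p ψ (ι := ι)) := by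
  unfold GG
  refine Finset.measurable_prod _ fun i _ => Finset.measurable_prod _ fun j _ => ?_
  by_cases h : i = j
  · simp [h]
  · simp only [h, if_false]
    exact hψ.comp ((measurable_pi_apply i).sub (measurable_pi_apply j)).norm

variable (p) in
/-- weighted partition function -/
noncomputable def JJ (ν : Measure ℚ_[p]) (ψ : ℝ → ℂ) (ι : Type) [Fintype ι] (w : ℚ_[p] → ℂ) : ℂ :=
  ∫ x : ι → ℚ_[p], (∏ i, w (x i)) * GG p ψ x ∂(Measure.pi fun _ => ν)

lemma GG_reindex (ψ : ℝ → ℂ) {ι κ : Type} [Fintype ι] [Fintype κ] (e : ι ≃ κ) (x : κ → ℚ_[p]) :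
    GG p ψ (fun i => x (e i)) = GG p ψ x := by
  unfold GG
  refine Fintype.prod_equiv e _ _ fun i => Fintype.prod_equiv e _ _ fun j => ?_
  by_cases h : i = j
  · simp [h]
  · rw [if_neg h, if_neg (by simpa using h)]

lemma JJ_reindex (ν : Measure ℚ_[p]) [SigmaFinite ν] (ψ : ℝ → ℂ) {ι κ : Type} [Fintype ι] [Fintype κ]
    (e : ι ≃ κ) (w : ℚ_[p] → ℂ) : JJ p ν ψ ι w = JJ p ν ψ κ w := by
  unfold JJ
  rw [← (measurePreserving_piCongrLeft (fun _ : κ => ν) e).integral_comp']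
  congr 1
  ext x
  have hx : ∀ i, (MeasurableEquiv.piCongrLeft (fun _ : κ => ℚ_[p]) e x) (e i) = x i := by
    intro i
    simp [MeasurableEquiv.coe_piCongrLeft]
  rw [← GG_reindex ψ e]
  simp only [hx]
  congr 1
  exact Fintype.prod_equiv e _ _ fun i => by rw [hx]

lemma GG_split (ψ : ℝ → ℂ) {ι : Type} [Fintype ι] (P : ι → Prop) [DecidablePred P] (x : ι → ℚ_[p])
    (h : ∀ i j, P i → ¬ P j → ψ ‖x i - x j‖ = 1) :
    GG p ψ x = GG p ψ (fun i : {i // P i} => x i) * GG p ψ (fun i : {i // ¬ P i} => x i) := by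
  unfold GG
  rw [← Fintype.prod_subtype_mul_prod_subtype P]
  congr 1
  · refine Finset.prod_congr rfl fun i _ => ?_
    rw [← Fintype.prod_subtype_mul_prod_subtype P]
    rw [Finset.prod_eq_one (s := (Finset.univ : Finset {i // ¬ P i})), mul_one]
    · refine Finset.prod_congr rfl fun j _ => ?_
      by_cases hij : i = j
      · simp [hij]
      · rw [if_neg hij, if_neg (by simpa [Subtype.ext_iff] using hij)]
    · intro j _
      rw [h _ _ i.2 j.2]; simp
  · refine Finset.prod_congr rfl fun i _ => ?_
    rw [← Fintype.prod_subtype_mul_prod_subtype P]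
    rw [Finset.prod_eq_one (s := (Finset.univ : Finset {i // P i})), one_mul]
    · refine Finset.prod_congr rfl fun j _ => ?_
      by_cases hij : i = j
      · simp [hij]
      · rw [if_neg hij, if_neg (by simpa [Subtype.ext_iff] using hij)]
    · intro j _
      rw [norm_sub_rev, h _ _ j.2 i.2]; simp

lemma JJ_split_term (ν : Measure ℚ_[p]) [SigmaFinite ν] (ψ : ℝ → ℂ) {ι : Type} [Fintype ι]
    (P : ι → Prop) [DecidablePred P] (u v : ℚ_[p] → ℂ)
    (huv : ∀ x y, u x ≠ 0 → v y ≠ 0 → ψ ‖x - y‖ = 1) :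
    ∫ x : ι → ℚ_[p], (∏ i, if P i then u (x i) else v (x i)) * GG p ψ x ∂(Measure.pi fun _ => ν)
      = JJ p ν ψ {i // P i} u * JJ p ν ψ {i // ¬ P i} v := by
  unfold JJ
  rw [← integral_prod_mul, ← (measurePreserving_piEquivPiSubtypeProd (fun _ : ι => ν) P).integral_comp']
  congr 1
  ext x
  have h1 : ((MeasurableEquiv.piEquivPiSubtypeProd (fun _ : ι => ℚ_[p]) P) x).1 = fun i : {i // P i} => x i := rfl
  have h2 : ((MeasurableEquiv.piEquivPiSubtypeProd (fun _ : ι => ℚ_[p]) P) x).2 = fun i : {i // ¬ P i} => x i := rfl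
  rw [h1, h2, ← Fintype.prod_subtype_mul_prod_subtype P]
  have e1 : (∏ i : {i // P i}, if P i then u (x i) else v (x i)) = ∏ i : {i // P i}, u (x i) :=
    Finset.prod_congr rfl fun i _ => if_pos i.2
  have e2 : (∏ i : {i // ¬ P i}, if P i then u (x i) else v (x i)) = ∏ i : {i // ¬ P i}, v (x i) :=
    Finset.prod_congr rfl fun i _ => if_neg i.2
  rw [e1, e2]
  by_cases hz : (∏ i : {i // P i}, u (x i)) * ∏ i : {i // ¬ P i}, v (x i) = 0
  · rw [hz, zero_mul, mul_mul_mul_comm, hz, zero_mul]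
  · have hz1 := left_ne_zero_of_mul hz
    have hz2 := right_ne_zero_of_mul hz
    rw [GG_split ψ P x, mul_mul_mul_comm]
    intro i j hi hj
    exact huv _ _ (Finset.prod_ne_zero_iff.1 hz1 ⟨i, hi⟩ (Finset.mem_univ _))
      (Finset.prod_ne_zero_iff.1 hz2 ⟨j, hj⟩ (Finset.mem_univ _))

lemma JJ_split_term2 (ν : Measure ℚ_[p]) [SigmaFinite ν] (ψ : ℝ → ℂ) {ι : Type} [Fintype ι]
    (P : ι → Prop) [DecidablePred P] (u v : ℚ_[p] → ℂ)
    (huv : ∀ x y, u x ≠ 0 → v y ≠ 0 → ψ ‖x - y‖ = 1) (k l : ℕ)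
    (hk : Fintype.card {i // P i} = k) (hl : Fintype.card {i // ¬ P i} = l) :
    ∫ x : ι → ℚ_[p], (∏ i, if P i then u (x i) else v (x i)) * GG p ψ x ∂(Measure.pi fun _ => ν)
      = JJ p ν ψ (Fin k) u * JJ p ν ψ (Fin l) v := by
  rw [JJ_split_term ν ψ P u v huv,
    JJ_reindex ν ψ (Fintype.equivFinOfCardEq hk) u, JJ_reindex ν ψ (Fintype.equivFinOfCardEq hl) v]

/-- normalized coefficient -/
noncomputable def cf (ν : Measure ℚ_[p]) (ψ : ℝ → ℂ) (n : ℕ) (w : ℚ_[p] → ℂ) : ℂ :=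
  JJ p ν ψ (Fin n) w / n.factorial

lemma cf_add (ν : Measure ℚ_[p]) [SigmaFinite ν] (ψ : ℝ → ℂ) (n : ℕ)
    (u v : ℚ_[p] → ℂ) (hu : Measurable u) (hv : Measurable v)
    (hub : ∀ x, ‖u x‖ ≤ 1) (hvb : ∀ x, ‖v x‖ ≤ 1)
    (hi : Integrable (GG p ψ (ι := Fin n)) (Measure.pi fun _ => ν))
    (huv : ∀ x y, u x ≠ 0 → v y ≠ 0 → ψ ‖x - y‖ = 1) :
    cf ν ψ n (fun x => u x + v x) =
      ∑ q ∈ Finset.HasAntidiagonal.antidiagonal n, cf ν ψ q.1 u * cf ν ψ q.2 v := by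
  have key : JJ p ν ψ (Fin n) (fun x => u x + v x) =
      ∑ t ∈ (Finset.univ : Finset (Fin n)).powerset,
        (fun k => JJ p ν ψ (Fin k) u * JJ p ν ψ (Fin (n - k)) v) t.card := by
    unfold JJ
    simp_rw [Finset.prod_add, Finset.sum_mul]
    rw [integral_finsetSum]
    · refine Finset.sum_congr rfl fun t _ => ?_
      have hc : Fintype.card {i // i ∈ t} = t.card := Fintype.card_of_subtype t fun _ => Iff.rfl
      have := JJ_split_term2 ν ψ (fun i : Fin n => i ∈ t) u v huv t.card (n - t.card)
        (by convert hc)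
        (by rw [Fintype.card_of_subtype tᶜ (fun x => by simp)]; simp [Finset.card_compl])
      unfold JJ at this
      rw [← this]
      congr 1
      ext x
      rw [Finset.prod_ite]
      congr 3
      · ext; simp
      · ext; simp
    · intro t _
      refine hi.bdd_mul (c := 1) ?_ ?_
      · refine Measurable.aestronglyMeasurable ?_
        refine Measurable.mul ?_ ?_
        · exact Finset.measurable_prod _ fun i _ => hu.comp (measurable_pi_apply i)
        · exact Finset.measurable_prod _ fun i _ => hv.comp (measurable_pi_apply i)
      · refine Filter.Eventually.of_forall fun x => ?_
        rw [norm_mul, norm_prod, norm_prod]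
        refine mul_le_one₀ ?_ (by positivity) ?_
        · exact Finset.prod_le_one (fun _ _ => norm_nonneg _) fun _ _ => hub _
        · exact Finset.prod_le_one (fun _ _ => norm_nonneg _) fun _ _ => hvb _
  unfold cf
  rw [key, Finset.sum_powerset_apply_card (fun k => JJ p ν ψ (Fin k) u * JJ p ν ψ (Fin (n - k)) v), Finset.card_univ, Fintype.card_fin,
    Finset.Nat.sum_antidiagonal_eq_sum_range_succ_mk, Finset.sum_div]
  refine Finset.sum_congr rfl fun k hk => ?_
  have hk' : k ≤ n := by simp at hk; omega
  have hc : ((n.choose k : ℕ) : ℂ) = n.factorial / (k.factorial * (n - k).factorial) :=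
    Nat.cast_choose ℂ hk'
  simp only [nsmul_eq_mul, hc]
  have a1 : (n.factorial : ℂ) ≠ 0 := by exact_mod_cast n.factorial_ne_zero
  have a2 : (k.factorial : ℂ) ≠ 0 := by exact_mod_cast k.factorial_ne_zero
  have a3 : ((n - k).factorial : ℂ) ≠ 0 := by exact_mod_cast (n - k).factorial_ne_zero
  field_simp
end

section
variable {p : ℕ} [hp : Fact p.Prime]

lemma pi_smul_meas {n : ℕ} (c : ENNReal) (m : Measure ℚ_[p]) [SigmaFinite m] [SigmaFinite (c • m)] :
    (Measure.pi fun _ : Fin n => c • m) = c ^ n • Measure.pi fun _ : Fin n => m := by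
  refine (Measure.pi_eq fun s _ => ?_)
  simp [Measure.pi_pi, Finset.prod_mul_distrib]

lemma cf_DD (μ : Measure ℚ_[p]) [μ.IsAddHaarMeasure] (hμ : μ (Zball p) = 1) {ψ : ℝ → ℂ}
    (hψ : Measurable ψ) (n a : ℕ) :
    cf (μ.restrict (Zball p)) ψ n ((DD p a).indicator 1) =
      ((p:ℂ) ^ n)⁻¹ * cf (μ.restrict (Zball p)) (fun r => ψ (r / p)) n 1 := by
  have hp0 : (p:ℂ) ≠ 0 := by exact_mod_cast hp.out.ne_zero
  set ν := μ.restrict (Zball p) with hν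
  have hprob : IsProbabilityMeasure ν := ⟨by simp [hν, hμ]⟩
  have hD : MeasurableSet (DD p a) := (DD_open p a).measurableSet
  have hT : Measurable (fun y : ℚ_[p] => (a:ℚ_[p]) + p * y) := by
    have : Continuous (fun y : ℚ_[p] => (a:ℚ_[p]) + p * y) := by fun_prop
    exact this.measurable
  have hsf : IsFiniteMeasure ((p:ENNReal) • ν.restrict (DD p a)) := by
    rw [hν, ← map_T p μ hμ a]; infer_instance
  have h1 : JJ p ν ψ (Fin n) ((DD p a).indicator 1) =
      ∫ x, GG p ψ x ∂(Measure.pi fun _ : Fin n => ν.restrict (DD p a)) := by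
    unfold JJ
    rw [← Measure.restrict_pi_pi (fun _ : Fin n => ν), ← integral_indicator (MeasurableSet.univ_pi fun _ => hD)]
    congr 1
    ext x
    by_cases hx : x ∈ Set.pi Set.univ (fun _ : Fin n => DD p a)
    · rw [Set.indicator_of_mem hx, Finset.prod_eq_one, one_mul]
      intro i _
      rw [Set.indicator_of_mem (hx i trivial)]; rfl
    · rw [Set.indicator_of_notMem hx]
      simp only [Set.mem_pi, Set.mem_univ, true_imp_iff, not_forall] at hx
      obtain ⟨i, hi⟩ := hx
      rw [Finset.prod_eq_zero (Finset.mem_univ i) (Set.indicator_of_notMem hi _), zero_mul]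
  have h2 : JJ p ν (fun r => ψ (r / p)) (Fin n) 1 = (p:ℂ) ^ n * JJ p ν ψ (Fin n) ((DD p a).indicator 1) := by
    rw [h1]
    have e1 : (Measure.pi fun _ : Fin n => ν).map (fun x i => (a:ℚ_[p]) + p * x i) =
        (p:ENNReal) ^ n • (Measure.pi fun _ : Fin n => ν.restrict (DD p a)) := by
      rw [← pi_smul_meas, ← map_T p μ hμ a]
      exact (Measure.pi_map_pi (fun _ => hT.aemeasurable))
    have e2 : ∫ x, GG p ψ x ∂((Measure.pi fun _ : Fin n => ν).map (fun x i => (a:ℚ_[p]) + p * x i)) =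
      (p:ℂ) ^ n * ∫ x, GG p ψ x ∂(Measure.pi fun _ : Fin n => ν.restrict (DD p a)) := by
      rw [e1, integral_smul_measure]
      simp [ENNReal.toReal_pow]
    rw [← e2, integral_map]
    · unfold JJ
      congr 1
      ext x
      simp only [Pi.one_apply, Finset.prod_const_one, one_mul, GG]
      refine Finset.prod_congr rfl fun i _ => Finset.prod_congr rfl fun j _ => ?_
      have : ‖(a:ℚ_[p]) + p * x i - (a + p * x j)‖ = ‖x i - x j‖ / p := by
        rw [add_sub_add_left_eq_sub, ← mul_sub, norm_mul, Padic.norm_p, div_eq_inv_mul]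
      rw [this]
    · exact (measurable_pi_lambda _ fun i => hT.comp (measurable_pi_apply i)).aemeasurable
    · exact (GG_meas hψ).aestronglyMeasurable
  unfold cf
  rw [h2]
  field_simp

/-- the series with ball coefficients -/
noncomputable def BB (ν : Measure ℚ_[p]) (ψ : ℝ → ℂ) : PowerSeries ℂ :=
  PowerSeries.mk fun n => ((p:ℂ) ^ n)⁻¹ * cf ν (fun r => ψ (r / p)) n 1

lemma cf_S (μ : Measure ℚ_[p]) [μ.IsAddHaarMeasure] (hμ : μ (Zball p) = 1) {ψ : ℝ → ℂ}
    (hψ : Measurable ψ) (h1 : ψ 1 = 1) (N : ℕ)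
    (hi : ∀ n ≤ N, Integrable (GG p ψ (ι := Fin n)) (Measure.pi fun _ => μ.restrict (Zball p)))
    (S : Finset ℕ) : (∀ k ∈ S, k < p) → ∀ n ≤ N,
    cf (μ.restrict (Zball p)) ψ n ((⋃ k ∈ S, DD p k).indicator 1) =
      PowerSeries.coeff n (BB (μ.restrict (Zball p)) ψ ^ S.card) := by
  have hfin : IsFiniteMeasure (μ.restrict (Zball p)) := ⟨by simp [hμ]⟩
  have hprob : IsProbabilityMeasure (μ.restrict (Zball p)) := ⟨by simp [hμ]⟩
  induction S using Finset.induction_on with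
  | empty =>
    intro _ n hn
    rcases Nat.eq_zero_or_pos n with rfl | hn0
    · simp [cf, JJ, GG, measureReal_def]
    · have : NeZero n := ⟨hn0.ne'⟩
      have : JJ p (μ.restrict (Zball p)) ψ (Fin n) ((⋃ k ∈ (∅ : Finset ℕ), DD p k).indicator 1) = 0 := by
        unfold JJ
        simp [Finset.prod_const, hn0.ne']
      rw [cf, this]
      simp [PowerSeries.coeff_one, hn0.ne']
  | insert a S ha ih =>
    intro hS n hn
    have hS' : ∀ k ∈ S, k < p := fun k hk => hS k (Finset.mem_insert_of_mem hk)
    have hap : a < p := hS a (Finset.mem_insert_self _ _)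
    have hd : Disjoint (DD p a) (⋃ k ∈ S, DD p k) := by
      simp only [Set.disjoint_iUnion_right]
      intro k hk
      exact DD_disj p hap (hS' k hk) (by rintro rfl; exact ha hk)
    rw [Finset.set_biUnion_insert, Set.indicator_union_of_disjoint hd]
    have hb : ∀ (s : Set ℚ_[p]) (x : ℚ_[p]), ‖s.indicator (1 : ℚ_[p] → ℂ) x‖ ≤ 1 := by
      intro s x
      by_cases hx : x ∈ s <;> simp [hx]
    rw [cf_add]
    · rw [Finset.card_insert_of_notMem ha, pow_succ', PowerSeries.coeff_mul]
      refine Finset.sum_congr rfl fun q hq => ?_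
      have hq' := Finset.HasAntidiagonal.mem_antidiagonal.1 hq
      rw [ih hS' q.2 (by omega), cf_DD μ hμ hψ, BB, PowerSeries.coeff_mk]
    · exact measurable_one.indicator (DD_open p a).measurableSet
    · exact measurable_one.indicator (Finset.measurableSet_biUnion _ fun k _ => (DD_open p k).measurableSet)
    · exact hb _
    · exact hb _
    · exact hi n hn
    · intro x y hx hy
      have hx' := Set.mem_of_indicator_ne_zero hx
      have hy' := Set.mem_of_indicator_ne_zero hy
      simp only [Set.mem_iUnion] at hy'
      obtain ⟨k, hk, hy'⟩ := hy'
      rw [norm_of_DD p hap (hS' k hk) (by rintro rfl; exact ha hk) hx' hy', h1]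

lemma cf_Z (μ : Measure ℚ_[p]) [μ.IsAddHaarMeasure] (hμ : μ (Zball p) = 1) {ψ : ℝ → ℂ} (n : ℕ) :
    cf (μ.restrict (Zball p)) ψ n ((⋃ k ∈ Finset.range p, DD p k).indicator 1) =
      cf (μ.restrict (Zball p)) ψ n 1 := by
  have hfin : IsFiniteMeasure (μ.restrict (Zball p)) := ⟨by simp [hμ]⟩
  rw [← Zball_eq]
  unfold cf JJ
  congr 1
  refine integral_congr_ae ?_
  have hZ : MeasurableSet (Zball p) := by
    rw [Zball_eq]
    exact (Finset.measurableSet_biUnion _ fun k _ => (DD_open p k).measurableSet)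
  have : ∀ᵐ x ∂(Measure.pi fun _ : Fin n => μ.restrict (Zball p)), ∀ i, x i ∈ Zball p := by
    rw [← Measure.restrict_pi_pi]
    filter_upwards [ae_restrict_mem (MeasurableSet.univ_pi fun _ => hZ)] with x hx i
    exact hx i trivial
  filter_upwards [this] with x hx
  simp [hx]

/-- The quadratic identity. -/
lemma quad (μ : Measure ℚ_[p]) [μ.IsAddHaarMeasure] (hμ : μ (Zball p) = 1) {ψ : ℝ → ℂ}
    (hψ : Measurable ψ) (h1 : ψ 1 = 1) (N : ℕ)
    (hi : ∀ n ≤ N, Integrable (GG p ψ (ι := Fin n)) (Measure.pi fun _ => μ.restrict (Zball p))) :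
    ∑ k ∈ Finset.range (N + 1), (k:ℂ) * cf (μ.restrict (Zball p)) ψ k 1 *
        (((p:ℂ) ^ (N - k))⁻¹ * cf (μ.restrict (Zball p)) (fun r => ψ (r / p)) (N - k) 1) =
    (p:ℂ) * ∑ k ∈ Finset.range (N + 1), (k:ℂ) * (((p:ℂ) ^ k)⁻¹ * cf (μ.restrict (Zball p)) (fun r => ψ (r / p)) k 1) *
        cf (μ.restrict (Zball p)) ψ (N - k) 1 := by
  rcases N with _ | M
  · simp
  set ν := μ.restrict (Zball p)
  have hA : ∀ n ≤ M + 1, cf ν ψ n 1 = PowerSeries.coeff n (BB ν ψ ^ p) := by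
    intro n hn
    have := cf_S μ hμ hψ h1 (M+1) hi (Finset.range p) (fun k hk => Finset.mem_range.1 hk) n hn
    rwa [cf_Z μ hμ, Finset.card_range] at this
  have hB : ∀ n, ((p:ℂ) ^ n)⁻¹ * cf ν (fun r => ψ (r / p)) n 1 = PowerSeries.coeff n (BB ν ψ) := by
    intro n; rw [BB, PowerSeries.coeff_mk]
  set B := BB ν ψ
  have hder : PowerSeries.derivative ℂ (B ^ p) * B = (PowerSeries.C (p:ℂ)) * (PowerSeries.derivative ℂ B * B ^ p) := by
    rw [Derivation.leibniz_pow]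
    obtain ⟨q, hq⟩ := Nat.exists_eq_succ_of_ne_zero hp.out.ne_zero
    have : (p:PowerSeries ℂ) = PowerSeries.C (p:ℂ) := by simp
    simp only [nsmul_eq_mul, smul_eq_mul, ← this]
    have h3 : B ^ p = B ^ (p-1) * B := by rw [← pow_succ]; congr 1; omega
    rw [h3]; ring
  have hco := congrArg (PowerSeries.coeff M) hder
  rw [PowerSeries.coeff_mul, PowerSeries.coeff_C_mul, PowerSeries.coeff_mul,
    Finset.Nat.sum_antidiagonal_eq_sum_range_succ_mk, Finset.Nat.sum_antidiagonal_eq_sum_range_succ_mk] at hco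
  rw [Finset.sum_range_succ' _ (M+1), Finset.sum_range_succ' _ (M+1)]
  simp only [Nat.cast_zero, zero_mul, add_zero]
  simp only [hB]
  refine Eq.trans ?_ (hco.trans (congrArg _ ?_))
  · refine Finset.sum_congr rfl fun k hk => ?_
    have := Finset.mem_range.1 hk
    rw [hA _ (by omega), PowerSeries.coeff_derivative, Nat.add_sub_add_right]
    push_cast; ring
  · refine Finset.sum_congr rfl fun k hk => ?_
    have := Finset.mem_range.1 hk
    rw [hA _ (by omega), PowerSeries.coeff_derivative, Nat.add_sub_add_right]
    push_cast; ring
end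

section
variable {p : ℕ} [hp : Fact p.Prime]

lemma ae_Z (μ : Measure ℚ_[p]) [μ.IsAddHaarMeasure] (hμ : μ (Zball p) = 1) (n : ℕ) :
    ∀ᵐ x ∂(Measure.pi fun _ : Fin n => μ.restrict (Zball p)), ∀ i, x i ∈ Zball p := by
  have hZ : MeasurableSet (Zball p) := by
    rw [Zball_eq]
    exact (Finset.measurableSet_biUnion _ fun k _ => (DD_open p k).measurableSet)
  rw [← Measure.restrict_pi_pi]
  filter_upwards [ae_restrict_mem (MeasurableSet.univ_pi fun _ => hZ)] with x hx i
  exact hx i trivial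

lemma cf_zero (ν : Measure ℚ_[p]) [IsProbabilityMeasure ν] (ψ : ℝ → ℂ) : cf ν ψ 0 1 = 1 := by
  simp [cf, JJ, GG]

lemma cf_one (ν : Measure ℚ_[p]) [IsProbabilityMeasure ν] (ψ : ℝ → ℂ) : cf ν ψ 1 1 = 1 := by
  simp [cf, JJ, GG]

lemma GG_const {ψ ψ' : ℝ → ℂ} {c : ℂ} (h : ∀ r, 0 ≤ r → ψ' r = c * ψ r) (n : ℕ) (x : Fin n → ℚ_[p]) :
    GG p ψ' x = c ^ (n * (n - 1)) * GG p ψ x := by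
  have : ∀ i : Fin n, (∏ j, if i = j then 1 else ψ' ‖x i - x j‖) =
      c ^ (n - 1) * ∏ j, if i = j then 1 else ψ ‖x i - x j‖ := by
    intro i
    rw [← Finset.mul_prod_erase _ _ (Finset.mem_univ i),
      ← Finset.mul_prod_erase _ (fun j => if i = j then 1 else ψ ‖x i - x j‖) (Finset.mem_univ i)]
    simp only [if_true, one_mul]
    have hc : (Finset.univ.erase i).card = n - 1 := by simp
    rw [← hc, ← Finset.prod_const, ← Finset.prod_mul_distrib]
    refine Finset.prod_congr rfl fun j hj => ?_
    rw [if_neg (Finset.ne_of_mem_erase hj).symm, if_neg (Finset.ne_of_mem_erase hj).symm,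
      h _ (norm_nonneg _)]
  unfold GG
  have h2 : ∀ i : Fin n, i ∈ Finset.univ → (∏ j, @ite _ (i = j) (Classical.propDecidable _) 1 (ψ' ‖x i - x j‖)) =
      c ^ (n - 1) * ∏ j, @ite _ (i = j) (Classical.propDecidable _) 1 (ψ ‖x i - x j‖) := by
    intro i _
    convert this i
  rw [Finset.prod_congr rfl h2, Finset.prod_mul_distrib, Finset.prod_const, Finset.card_univ,
    Fintype.card_fin, ← pow_mul, mul_comm (n - 1) n]

lemma cf_const (ν : Measure ℚ_[p]) {ψ ψ' : ℝ → ℂ} {c : ℂ} (h : ∀ r, 0 ≤ r → ψ' r = c * ψ r) (n : ℕ) :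
    cf ν ψ' n 1 = c ^ (n * (n - 1)) * cf ν ψ n 1 := by
  unfold cf JJ
  simp_rw [GG_const h]
  simp only [Pi.one_apply, Finset.prod_const_one, one_mul]
  rw [integral_const_mul, mul_div_assoc]

variable (p) in
/-- truncated interaction -/
noncomputable def psm (b : ℝ) (m : ℕ) (r : ℝ) : ℂ := (((max r ((p:ℝ)^m)⁻¹) ^ (b / 2) : ℝ) : ℂ)

lemma psm_meas (b : ℝ) (m : ℕ) : Measurable (psm p b m) := by
  unfold psm
  fun_prop

lemma psm_one (b : ℝ) (m : ℕ) : psm p b m 1 = 1 := by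
  have hp1 : (1:ℝ) ≤ p := by exact_mod_cast hp.out.one_lt.le
  have : ((p:ℝ)^m)⁻¹ ≤ 1 := inv_le_one_of_one_le₀ (one_le_pow₀ hp1)
  simp [psm, max_eq_left this]

lemma psm_scale (b : ℝ) (m : ℕ) (r : ℝ) (hr : 0 ≤ r) :
    psm p b (m+1) (r / p) = (((p:ℝ) ^ (-(b/2)) : ℝ) : ℂ) * psm p b m r := by
  have hp0 : (0:ℝ) < p := by exact_mod_cast hp.out.pos
  unfold psm
  rw [← Complex.ofReal_mul]
  congr 1
  have : max (r / p) ((p:ℝ)^(m+1))⁻¹ = max r ((p:ℝ)^m)⁻¹ / p := by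
    rw [← max_div_div_right hp0.le, pow_succ, mul_inv, div_eq_mul_inv ((p:ℝ)^m)⁻¹]
  rw [this, Real.div_rpow (by positivity) hp0.le, Real.rpow_neg hp0.le]
  field_simp

lemma psm_int (μ : Measure ℚ_[p]) [μ.IsAddHaarMeasure] (hμ : μ (Zball p) = 1) (b : ℝ) (m n : ℕ) :
    Integrable (GG p (psm p b m) (ι := Fin n)) (Measure.pi fun _ => μ.restrict (Zball p)) := by
  have hprob : IsProbabilityMeasure (μ.restrict (Zball p)) := ⟨by simp [hμ]⟩
  have hp1 : (1:ℝ) ≤ p := by exact_mod_cast hp.out.one_lt.le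
  have hp0 : (0:ℝ) < p := by exact_mod_cast hp.out.pos
  set s : ℝ := ((p:ℝ)^m)⁻¹
  have hs : s ≤ 1 := inv_le_one_of_one_le₀ (one_le_pow₀ hp1)
  have hs0 : 0 < s := by positivity
  set K : ℝ := 1 + s ^ (b/2)
  have hK : 1 ≤ K := by have := Real.rpow_nonneg hs0.le (b/2); simp only [K]; linarith
  refine Integrable.of_bound (GG_meas (psm_meas b m)).aestronglyMeasurable (C := ∏ i : Fin n, ∏ j : Fin n, K) ?_
  filter_upwards [ae_Z μ hμ n] with x hx
  unfold GG
  rw [norm_prod]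
  refine Finset.prod_le_prod (fun _ _ => norm_nonneg _) fun i _ => ?_
  rw [norm_prod]
  refine Finset.prod_le_prod (fun _ _ => norm_nonneg _) fun j _ => ?_
  split_ifs
  · simpa using hK
  · have h1 : ‖x i - x j‖ ≤ 1 := by
      rw [sub_eq_add_neg]
      refine (Padic.nonarchimedean _ _).trans (max_le (hx i) ?_)
      rw [norm_neg]; exact hx j
    have h2 : max ‖x i - x j‖ s ≤ 1 := max_le h1 hs
    have h3 : s ≤ max ‖x i - x j‖ s := le_max_right _ _
    have h4 : 0 < max ‖x i - x j‖ s := lt_of_lt_of_le hs0 h3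
    rw [psm, Complex.norm_real, Real.norm_of_nonneg (by positivity)]
    rcases le_total 0 b with hb | hb
    · have : (max ‖x i - x j‖ s) ^ (b/2) ≤ 1 := Real.rpow_le_one h4.le h2 (by linarith)
      exact this.trans hK
    · have : (max ‖x i - x j‖ s) ^ (b/2) ≤ s ^ (b/2) :=
        Real.rpow_le_rpow_of_nonpos hs0 h3 (by linarith)
      simp only [K]; linarith

lemma bdd_rec (x : ℕ → ℝ) (c C : ℝ) (hc0 : 0 ≤ c) (hc : c < 1) (h : ∀ m, x (m+1) ≤ c * x m + C) :
    ∃ X, ∀ m, x m ≤ X := by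
  refine ⟨max (x 0) (C / (1 - c)), fun m => ?_⟩
  induction m with
  | zero => exact le_max_left _ _
  | succ m ih =>
    set X := max (x 0) (C / (1 - c))
    have h1 : C ≤ X * (1 - c) := by
      rw [← div_le_iff₀ (by linarith)]; exact le_max_right _ _
    have := h m
    nlinarith [mul_le_mul_of_nonneg_left ih hc0]

lemma c_lt (b : ℝ) (n : ℕ) (hn : 2 ≤ n) (hb : -2 < n * b) :
    (p:ℝ) * (((p:ℝ)^n)⁻¹ * ((p:ℝ) ^ (-(b/2))) ^ (n * (n - 1))) < 1 := by
  have hp1 : (1:ℝ) < p := by exact_mod_cast hp.out.one_lt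
  have hp0 : (0:ℝ) < p := by linarith
  have hn1 : (2:ℝ) ≤ n := by exact_mod_cast hn
  have : (p:ℝ) * (((p:ℝ)^n)⁻¹ * ((p:ℝ) ^ (-(b/2))) ^ (n * (n - 1))) =
      (p:ℝ) ^ (-((n:ℝ) - 1) * (1 + n * b / 2)) := by
    rw [← Real.rpow_natCast, ← Real.rpow_natCast, ← Real.rpow_mul hp0.le, ← Real.rpow_neg hp0.le, 
      ← Real.rpow_add hp0]
    nth_rewrite 1 [← Real.rpow_one (p:ℝ)]
    rw [← Real.rpow_add hp0]
    congr 1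
    rw [Nat.cast_mul, Nat.cast_sub (by omega)]
    push_cast; ring
  rw [this]
  refine Real.rpow_lt_one_of_one_lt_of_neg hp1 ?_
  have : 0 < ((n:ℝ) - 1) * (1 + n * b / 2) := mul_pos (by linarith) (by linarith)
  linarith

lemma bdd (μ : Measure ℚ_[p]) [μ.IsAddHaarMeasure] (hμ : μ (Zball p) = 1) (b : ℝ) (N : ℕ)
    (hb : ∀ n, n ≤ N → -2 < n * b) (n : ℕ) : n ≤ N →
    ∃ C, ∀ m, ‖cf (μ.restrict (Zball p)) (psm p b m) n 1‖ ≤ C := by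
  have hprob : IsProbabilityMeasure (μ.restrict (Zball p)) := ⟨by simp [hμ]⟩
  set ν := μ.restrict (Zball p) with hν
  have hp0 : (0:ℝ) < p := by exact_mod_cast hp.out.pos
  induction n using Nat.strong_induction_on with
  | _ n ih =>
  intro hn
  rcases n with _ | _ | M
  · exact ⟨1, fun m => by simp [cf_zero]⟩
  · exact ⟨1, fun m => by simp [cf_one]⟩
  choose! C hC using ih
  set d : ℂ := (((p:ℝ) ^ (-(b/2)) : ℝ) : ℂ) with hd
  set e : ℕ → ℂ := fun k => ((p:ℂ)^k)⁻¹ * d ^ (k * (k - 1)) with he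
  set C' : ℝ := ∑ k ∈ Finset.range (M+1), ((k:ℝ)+1) * C (k+1) * (‖e (M+1-k)‖ * C (M+1-k)) +
    p * ∑ k ∈ Finset.range (M+1), ((k:ℝ)+1) * (‖e (k+1)‖ * C (k+1)) * C (M+1-k) with hC'
  refine bdd_rec (fun m => ‖cf ν (psm p b m) (M+2) 1‖) (p * ‖e (M+2)‖) (C' / (M+2)) (by positivity) ?_ ?_
  · have := c_lt (p := p) b (M+2) (by omega) (hb _ hn)
    convert this using 2
    rw [he]
    simp only [norm_mul, norm_inv, norm_pow, hd, Complex.norm_real, Complex.norm_natCast]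
    rw [Real.norm_of_nonneg (by positivity)]
  · intro m
    have hq := quad μ hμ (psm_meas (p := p) b (m+1)) (psm_one b (m+1)) (M+2) (fun n _ => psm_int μ hμ b (m+1) n)
    have hcc : ∀ k, ((p:ℂ)^k)⁻¹ * cf ν (fun r => psm p b (m+1) (r / p)) k 1 = e k * cf ν (psm p b m) k 1 := by
      intro k
      rw [cf_const ν (psm_scale b m) k, he, mul_assoc]
    rw [← hν] at hq
    simp only [hcc] at hq
    rw [Finset.sum_range_succ' _ (M+2), Finset.sum_range_succ' _ (M+2), Finset.sum_range_succ _ (M+1),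
      Finset.sum_range_succ _ (M+1)] at hq
    have e0 : e 0 = 1 := by simp [he]
    have t1 : M + 2 - (M + 1 + 1) = 0 := by omega
    have t2 : ∀ k, M + 2 - (k + 1) = M + 1 - k := by intro k; omega
    simp only [t1, cf_zero, e0, mul_one, Nat.cast_zero, zero_mul, add_zero] at hq
    simp only [t2] at hq
    have hM : (0:ℝ) < M + 2 := by positivity
    have hq2 : ((M:ℂ) + 2) * cf ν (psm p b (m+1)) (M+2) 1 = (M+2) * (p * (e (M+2) * cf ν (psm p b m) (M+2) 1)) +
      (p * ∑ k ∈ Finset.range (M+1), ((k+1:ℕ):ℂ) * (e (k+1) * cf ν (psm p b m) (k+1) 1) * cf ν (psm p b (m+1)) (M+1-k) 1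
      - ∑ k ∈ Finset.range (M+1), ((k+1:ℕ):ℂ) * cf ν (psm p b (m+1)) (k+1) 1 * (e (M+1-k) * cf ν (psm p b m) (M+1-k) 1)) := by
      push_cast at hq ⊢
      linear_combination hq
    have hb1 : ‖(p:ℂ) * ∑ k ∈ Finset.range (M+1), ((k+1:ℕ):ℂ) * (e (k+1) * cf ν (psm p b m) (k+1) 1) * cf ν (psm p b (m+1)) (M+1-k) 1‖
        ≤ p * ∑ k ∈ Finset.range (M+1), ((k:ℝ)+1) * (‖e (k+1)‖ * C (k+1)) * C (M+1-k) := by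
      rw [norm_mul, Complex.norm_natCast]
      refine mul_le_mul_of_nonneg_left ?_ hp0.le
      refine norm_sum_le_of_le _ fun k hk => ?_
      have hk' := Finset.mem_range.1 hk
      have i1 := hC (k+1) (by omega) (by omega) m
      have i2 := hC (M+1-k) (by omega) (by omega) (m+1)
      rw [norm_mul, norm_mul, norm_mul, Complex.norm_natCast]
      push_cast
      have := (norm_nonneg _).trans i1
      gcongr
    have hb2 : ‖∑ k ∈ Finset.range (M+1), ((k+1:ℕ):ℂ) * cf ν (psm p b (m+1)) (k+1) 1 * (e (M+1-k) * cf ν (psm p b m) (M+1-k) 1)‖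
        ≤ ∑ k ∈ Finset.range (M+1), ((k:ℝ)+1) * C (k+1) * (‖e (M+1-k)‖ * C (M+1-k)) := by
      refine norm_sum_le_of_le _ fun k hk => ?_
      have hk' := Finset.mem_range.1 hk
      have i1 := hC (k+1) (by omega) (by omega) (m+1)
      have i2 := hC (M+1-k) (by omega) (by omega) m
      rw [norm_mul, norm_mul, norm_mul, Complex.norm_natCast]
      push_cast
      have := (norm_nonneg _).trans i1
      gcongr
    have hq3 := congrArg norm hq2
    have nM : ‖(M:ℂ) + 2‖ = M + 2 := by
      have : (M:ℂ) + 2 = ((M+2:ℕ):ℂ) := by push_cast; rfl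
      rw [this, Complex.norm_natCast]; push_cast; rfl
    rw [norm_mul, nM] at hq3
    have hq4 : ((M:ℝ)+2) * ‖cf ν (psm p b (m+1)) (M+2) 1‖ ≤ (M+2) * (p * ‖e (M+2)‖ * ‖cf ν (psm p b m) (M+2) 1‖) + C' := by
      rw [hq3]
      refine (norm_add_le _ _).trans (add_le_add ?_ ((norm_sub_le _ _).trans ?_))
      · rw [norm_mul, norm_mul, norm_mul, nM, Complex.norm_natCast, mul_assoc (p:ℝ)]
      · rw [hC']; linarith
    show ‖cf ν (psm p b (m+1)) (M+2) 1‖ ≤ p * ‖e (M+2)‖ * ‖cf ν (psm p b m) (M+2) 1‖ + C' / (M+2)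
    rw [← sub_le_iff_le_add', le_div_iff₀ hM]
    linarith
end

section
variable {p : ℕ} [hp : Fact p.Prime]

/-- the interaction -/
noncomputable def psb (β : ℂ) (r : ℝ) : ℂ := (r : ℂ) ^ (β / 2)

lemma psb_meas (β : ℂ) : Measurable (psb β) := by
  unfold psb
  fun_prop

lemma psb_one (β : ℂ) : psb β 1 = 1 := by simp [psb]

lemma psb_scale (β : ℂ) (r : ℝ) (hr : 0 ≤ r) :
    psb β (r / p) = ((p:ℂ) ^ (-(β/2))) * psb β r := by
  have hp0 : (0:ℝ) < p := by exact_mod_cast hp.out.pos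
  unfold psb
  rw [div_eq_inv_mul, Complex.ofReal_mul, Complex.mul_cpow_ofReal_nonneg (by positivity) hr]
  congr 1
  push_cast
  rw [Complex.inv_cpow _ _ (by rw [Complex.natCast_arg]; exact Real.pi_pos.ne), Complex.cpow_neg]

lemma psb_norm (β : ℂ) (r : ℝ) (hr : 0 < r) (m : ℕ) (hm : ((p:ℝ)^m)⁻¹ ≤ r) :
    ‖psb β r‖ = ‖psm p β.re m r‖ := by
  unfold psb psm
  rw [max_eq_left hm, Complex.norm_real, Real.norm_of_nonneg (by positivity),
    Complex.norm_cpow_eq_rpow_re_of_pos hr]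
  simp

lemma psb_int_ne (μ : Measure ℚ_[p]) [μ.IsAddHaarMeasure] (hμ : μ (Zball p) = 1) (β : ℂ) (hβ : β ≠ 0) (N : ℕ)
    (hb : ∀ n : ℕ, n ≤ N → -2 < n * β.re) (n : ℕ) (hn : n ≤ N) :
    Integrable (GG p (psb β) (ι := Fin n)) (Measure.pi fun _ => μ.restrict (Zball p)) := by
  have hprob : IsProbabilityMeasure (μ.restrict (Zball p)) := ⟨by simp [hμ]⟩
  refine ⟨(GG_meas (psb_meas β)).aestronglyMeasurable, ?_⟩
  obtain ⟨C, hC⟩ := bdd μ hμ β.re N hb n hn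
  set P : Measure (Fin n → ℚ_[p]) := Measure.pi fun _ => μ.restrict (Zball p) with hP
  have hp1 : (1:ℝ) < p := by exact_mod_cast hp.out.one_lt
  have hev : ∀ x : Fin n → ℚ_[p], ∀ᶠ m in Filter.atTop, ‖GG p (psb β) x‖ₑ ≤ ‖GG p (psm p β.re m) x‖ₑ := by
    intro x
    by_cases hx : ∃ i j, i ≠ j ∧ x i = x j
    · obtain ⟨i, j, hij, h⟩ := hx
      have : GG p (psb β) x = 0 := by
        unfold GG
        refine Finset.prod_eq_zero (Finset.mem_univ i) (Finset.prod_eq_zero (Finset.mem_univ j) ?_)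
        rw [if_neg hij, h, sub_self, norm_zero, psb, Complex.ofReal_zero, Complex.zero_cpow (by simpa using hβ)]
      rw [this]; simp
    · push Not at hx
      have h2 : ∀ i j, ∀ᶠ m in Filter.atTop, i ≠ j → ((p:ℝ)^m)⁻¹ ≤ ‖x i - x j‖ := by
        intro i j
        by_cases hij : i = j
        · simp [hij]
        · have hpos : 0 < ‖x i - x j‖ := norm_pos_iff.2 (sub_ne_zero.2 (hx i j hij))
          have ht : Filter.Tendsto (fun m : ℕ => ((p:ℝ)^m)⁻¹) Filter.atTop (nhds 0) :=
            (tendsto_pow_atTop_atTop_of_one_lt hp1).inv_tendsto_atTop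
          filter_upwards [ht.eventually (gt_mem_nhds hpos)] with m hm _
          exact hm.le
      have h3 : ∀ᶠ m in Filter.atTop, ∀ i j, i ≠ j → ((p:ℝ)^m)⁻¹ ≤ ‖x i - x j‖ := by
        rw [Filter.eventually_all]; intro i; rw [Filter.eventually_all]; intro j; exact h2 i j
      filter_upwards [h3] with m hm
      refine le_of_eq ?_
      rw [enorm_eq_iff_norm_eq]
      unfold GG
      rw [norm_prod, norm_prod]
      refine Finset.prod_congr rfl fun i _ => ?_
      rw [norm_prod, norm_prod]
      refine Finset.prod_congr rfl fun j _ => ?_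
      by_cases hij : i = j
      · simp [hij]
      · rw [if_neg hij, if_neg hij]
        exact psb_norm β _ (norm_pos_iff.2 (sub_ne_zero.2 (hx i j hij))) m (hm i j hij)
  have hreal : ∀ m (x : Fin n → ℚ_[p]), GG p (psm p β.re m) x = ((‖GG p (psm p β.re m) x‖ : ℝ) : ℂ) := by
    intro m x
    unfold GG
    rw [norm_prod, Complex.ofReal_prod]
    refine Finset.prod_congr rfl fun i _ => ?_
    rw [norm_prod, Complex.ofReal_prod]
    refine Finset.prod_congr rfl fun j _ => ?_
    split_ifs
    · simp
    · rw [psm, Complex.norm_real, Real.norm_of_nonneg (by positivity)]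
  have hbound : ∀ m, ∫⁻ x, ‖GG p (psm p β.re m) x‖ₑ ∂P ≤ ENNReal.ofReal (n.factorial * C) := by
    intro m
    rw [← ofReal_integral_norm_eq_lintegral_enorm (psm_int μ hμ β.re m n)]
    refine ENNReal.ofReal_le_ofReal ?_
    have h1 : JJ p (μ.restrict (Zball p)) (psm p β.re m) (Fin n) 1 = ((∫ x, ‖GG p (psm p β.re m) x‖ ∂P : ℝ) : ℂ) := by
      unfold JJ
      rw [← integral_complex_ofReal]
      refine integral_congr_ae (Filter.Eventually.of_forall fun x => ?_)
      simp only [Pi.one_apply, Finset.prod_const_one, one_mul]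
      exact hreal m x
    have h2 := hC m
    rw [cf, h1, norm_div, Complex.norm_real, Complex.norm_natCast, div_le_iff₀ (by positivity)] at h2
    rw [mul_comm]
    exact (Real.le_norm_self _).trans h2
  calc ∫⁻ x, ‖GG p (psb β) x‖ₑ ∂P ≤ ∫⁻ x, Filter.liminf (fun m => ‖GG p (psm p β.re m) x‖ₑ) Filter.atTop ∂P := by
        refine lintegral_mono fun x => ?_
        exact Filter.le_liminf_of_le (by isBoundedDefault) (hev x)
    _ ≤ Filter.liminf (fun m => ∫⁻ x, ‖GG p (psm p β.re m) x‖ₑ ∂P) Filter.atTop :=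
        lintegral_liminf_le fun m => (GG_meas (psm_meas _ _)).enorm
    _ ≤ ENNReal.ofReal (n.factorial * C) := by
        refine Filter.liminf_le_of_le (by isBoundedDefault) fun b hb => ?_
        obtain ⟨m, hm⟩ := hb.exists
        exact hm.trans (hbound m)
    _ < ⊤ := ENNReal.ofReal_lt_top

lemma psb_int (μ : Measure ℚ_[p]) [μ.IsAddHaarMeasure] (hμ : μ (Zball p) = 1) (β : ℂ) (N : ℕ)
    (hb : ∀ n : ℕ, n ≤ N → -2 < n * β.re) (n : ℕ) (hn : n ≤ N) :
    Integrable (GG p (psb β) (ι := Fin n)) (Measure.pi fun _ => μ.restrict (Zball p)) := by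
  by_cases hβ : β = 0
  · have hprob : IsProbabilityMeasure (μ.restrict (Zball p)) := ⟨by simp [hμ]⟩
    have : GG p (psb β) (ι := Fin n) = fun _ => 1 := by
      ext x; simp [GG, psb, hβ]
    rw [this]; exact integrable_const _
  · exact psb_int_ne μ hμ β hβ N hb n hn

lemma GG_pairs (β : ℂ) (n : ℕ) (x : Fin n → ℚ_[p]) :
    GG p (psb β) x = ∏ q ∈ pairs n, (‖x q.1 - x q.2‖ : ℂ) ^ β := by
  have h0 : GG p (psb β) x = ∏ i, ∏ j ∈ ({i}ᶜ : Finset (Fin n)), psb β ‖x j - x i‖ := by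
    unfold GG
    refine Finset.prod_congr rfl fun i _ => ?_
    rw [← Finset.prod_subset (Finset.subset_univ ({i}ᶜ : Finset (Fin n)))]
    · refine Finset.prod_congr rfl fun j hj => ?_
      rw [if_neg (by simpa [eq_comm] using hj), norm_sub_rev]
    · intro j _ hj
      rw [if_pos (by simpa [eq_comm] using hj)]
  rw [h0, ← Finset.prod_prod_Ioi_mul_eq_prod_prod_off_diag (fun j i => psb β ‖x j - x i‖)]
  have h1 : ∀ r : ℝ, psb β r * psb β r = (r : ℂ) ^ β := by
    intro r
    unfold psb
    by_cases hr : (r:ℂ) = 0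
    · rw [hr]
      by_cases hβ : β = 0
      · simp [hβ]
      · rw [Complex.zero_cpow hβ, Complex.zero_cpow (by simpa using hβ), zero_mul]
    · rw [← Complex.cpow_add _ _ hr, add_halves]
  have h2 : pairs n = (Finset.univ.sigma fun i : Fin n => Finset.Ioi i).map (Equiv.sigmaEquivProd _ _).toEmbedding := by
    ext ⟨i, j⟩
    simp [pairs]
  rw [h2, Finset.prod_map, Finset.prod_sigma]
  refine Finset.prod_congr rfl fun i _ => Finset.prod_congr rfl fun j _ => ?_
  rw [norm_sub_rev (x j), h1]
  rfl
end

section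
variable {p : ℕ} [hp : Fact p.Prime]

lemma pexp (z : ℂ) : (p:ℂ) ^ z = Complex.exp ((Real.log p : ℂ) * z) := by
  have hp0 : (p:ℂ) ≠ 0 := by exact_mod_cast hp.out.ne_zero
  rw [Complex.cpow_def_of_ne_zero hp0, Complex.natCast_log]

lemma bexp (β : ℂ) (k : ℕ) :
    ((p:ℂ)^k)⁻¹ * ((p:ℂ) ^ (-(β/2))) ^ (k * (k - 1)) =
      Complex.exp ((Real.log p : ℂ) * (-(k:ℂ) - (k.choose 2 : ℂ) * β)) := by
  rw [← Complex.cpow_natCast, pexp, pexp, ← Complex.exp_neg, ← Complex.exp_nat_mul, ← Complex.exp_add]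
  congr 1
  rw [Nat.cast_choose_two]
  have : ((k * (k - 1) : ℕ) : ℂ) = (k:ℂ) * (k - 1) := by
    cases k with
    | zero => simp
    | succ k => push_cast; simp
  rw [this]; ring

lemma sinh_rec (β : ℂ) (a : ℕ → ℂ) (n : ℕ) (hn : n ≠ 0)
    (h : ∑ k ∈ Finset.range (n+1), (k:ℂ) * a k * (((p:ℂ)^(n-k))⁻¹ * (((p:ℂ) ^ (-(β/2))) ^ ((n-k) * ((n-k) - 1)) * a (n-k))) =
      (p:ℂ) * ∑ k ∈ Finset.range (n+1), (k:ℂ) * (((p:ℂ)^k)⁻¹ * (((p:ℂ) ^ (-(β/2))) ^ (k * (k - 1)) * a k)) * a (n-k))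
    (f : ℕ → ℂ) (hf : ∀ k, a k = (p:ℂ) ^ ((k.choose 2 : ℂ) * β / 2) * f k) :
    ∑ k ∈ Finset.range (n+1), (k:ℂ) * Complex.sinh (((Real.log p : ℂ) / 2) * (((n : ℂ) + (n.choose 2 : ℂ) * β) * (1 - 2 * (k : ℂ) / (n : ℂ)) + 1))
      * f (n-k) * f k = 0 := by
  have hn' : (n:ℂ) ≠ 0 := by exact_mod_cast hn
  have hp1 : (p:ℂ) = Complex.exp ((Real.log p : ℂ) * 1) := by rw [← pexp]; simp
  set t : ℂ := (Real.log p : ℂ) with ht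
  have key : ∀ k ∈ Finset.range (n+1), (k:ℂ) * Complex.sinh ((t / 2) * (((n : ℂ) + (n.choose 2 : ℂ) * β) * (1 - 2 * (k : ℂ) / (n : ℂ)) + 1))
      * f (n-k) * f k = (-(1/2) * Complex.exp (t * ((n-1)/2))) * ((k:ℂ) * a k * (((p:ℂ)^(n-k))⁻¹ * (((p:ℂ) ^ (-(β/2))) ^ ((n-k) * ((n-k) - 1)) * a (n-k)))
        - (p:ℂ) * ((k:ℂ) * (((p:ℂ)^k)⁻¹ * (((p:ℂ) ^ (-(β/2))) ^ (k * (k - 1)) * a k)) * a (n-k))) := by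
    intro k hk
    have hkn : k ≤ n := by simpa [Nat.lt_succ_iff] using hk
    rw [← mul_assoc (_⁻¹) _ (a (n-k)), ← mul_assoc (_⁻¹) _ (a k), bexp, bexp, hf k, hf (n-k), pexp, pexp, ← ht]
    rw [Complex.sinh]
    have e1 : Complex.exp (-((t / 2) * (((n : ℂ) + (n.choose 2 : ℂ) * β) * (1 - 2 * (k : ℂ) / (n : ℂ)) + 1)))
        = Complex.exp (t * ((n-1)/2)) * Complex.exp (t * ((k.choose 2 : ℂ) * β / 2)) * 
          Complex.exp (t * (-((n-k:ℕ):ℂ) - ((n-k).choose 2 : ℂ) * β)) * Complex.exp (t * (((n-k).choose 2 : ℂ) * β / 2)) := by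
      rw [← Complex.exp_add, ← Complex.exp_add, ← Complex.exp_add]
      congr 1
      simp only [Nat.cast_choose_two, Nat.cast_sub hkn]
      field_simp
      ring
    have e2 : Complex.exp (((t / 2) * (((n : ℂ) + (n.choose 2 : ℂ) * β) * (1 - 2 * (k : ℂ) / (n : ℂ)) + 1)))
        = Complex.exp (t * ((n-1)/2)) * Complex.exp (t * 1) * Complex.exp (t * ((k.choose 2 : ℂ) * β / 2)) * 
          Complex.exp (t * (-(k:ℂ) - (k.choose 2 : ℂ) * β)) * Complex.exp (t * (((n-k).choose 2 : ℂ) * β / 2)) := by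
      rw [← Complex.exp_add, ← Complex.exp_add, ← Complex.exp_add, ← Complex.exp_add]
      congr 1
      simp only [Nat.cast_choose_two, Nat.cast_sub hkn]
      field_simp
      ring
    rw [e1, e2, ← hp1]
    ring
  rw [Finset.sum_congr rfl key, ← Finset.mul_sum, Finset.sum_sub_distrib, ← Finset.mul_sum, h, sub_self, mul_zero]

lemma sinh_ne (z : ℂ) (hz : 0 < z.re) : Complex.sinh z ≠ 0 := by
  intro h
  rw [Complex.sinh, div_eq_zero_iff] at h
  rcases h with h | h
  · have h1 := congrArg (‖·‖) (sub_eq_zero.1 h)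
    simp only [Complex.norm_exp, Complex.neg_re] at h1
    have := Real.exp_injective h1
    linarith
  · norm_num at h

lemma f_eq_F (β : ℂ) (N : ℕ) (hb : ∀ n : ℕ, n ≤ N → -2 < n * β.re) (f : ℕ → ℂ) (f0 : f 0 = 1) (f1 : f 1 = 1)
    (h : ∀ n ≤ N, n ≠ 0 → ∑ k ∈ Finset.range (n+1), (k:ℂ) * Complex.sinh (((Real.log p : ℂ) / 2) * (((n : ℂ) + (n.choose 2 : ℂ) * β) * (1 - 2 * (k : ℂ) / (n : ℂ)) + 1))
      * f (n-k) * f k = 0) (n : ℕ) : n ≤ N → f n = F n (Real.log p) β := by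
  have hlog : 0 < Real.log p := Real.log_pos (by exact_mod_cast hp.out.one_lt)
  induction n using Nat.strong_induction_on with
  | _ n ih =>
    intro hn
    match n, ih, hn with
    | 0, _, _ => rw [f0, F]
    | 1, _, _ => rw [f1, F]
    | m+2, ih, hn =>
      have h1 := h (m+2) hn (by omega)
      have hm : ((m+2 : ℕ) : ℂ) ≠ 0 := by exact_mod_cast (by omega : m + 2 ≠ 0)
      have hne : Complex.sinh (((Real.log p : ℂ) / 2) * ((((m+2:ℕ) : ℂ) + ((m+2).choose 2 : ℂ) * β) - 1)) ≠ 0 := by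
        apply sinh_ne
        have e : ((Real.log p : ℂ) / 2) * ((((m+2:ℕ) : ℂ) + ((m+2).choose 2 : ℂ) * β) - 1) =
            ((Real.log p / 2 * (m+1) : ℝ) : ℂ) * (1 + ((m+2:ℕ):ℝ) / 2 * β) := by
          rw [Nat.cast_choose_two]; push_cast; ring
        rw [e, Complex.re_ofReal_mul]
        have h2 := hb (m+2) hn
        refine mul_pos (by positivity) ?_
        have : ((1:ℂ) + ((m+2:ℕ):ℝ) / 2 * β).re = 1 + ((m+2:ℕ):ℝ) / 2 * β.re := by
          rw [Complex.add_re, Complex.one_re, ← Complex.re_ofReal_mul]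
          push_cast; rfl
        rw [this]
        linarith
      rw [Finset.sum_range_succ, Finset.sum_range_succ'] at h1
      simp only [Nat.cast_zero, zero_mul, add_zero, Nat.sub_self, f0, mul_one] at h1
      have e3 : ((Real.log p : ℂ) / 2) * ((((m+2:ℕ) : ℂ) + ((m+2).choose 2 : ℂ) * β) * (1 - 2 * ((m+2:ℕ) : ℂ) / ((m+2:ℕ) : ℂ)) + 1) =
         -(((Real.log p : ℂ) / 2) * ((((m+2:ℕ) : ℂ) + ((m+2).choose 2 : ℂ) * β) - 1)) := by
        rw [mul_div_assoc, div_self hm]; ring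
      rw [e3, Complex.sinh_neg] at h1
      rw [F, Finset.sum_attach (Finset.Icc 1 (m+1)) (fun k => ((k : ℂ) / ((m : ℂ) + 2)) * rho (m + 2) k (Real.log p) β *
        F (m + 2 - k) (Real.log p) β * F k (Real.log p) β)]
      rw [Finset.range_eq_Ico, Finset.sum_Ico_add' (fun k : ℕ => (k:ℂ) * Complex.sinh (((Real.log p : ℂ) / 2) * ((((m+2:ℕ) : ℂ) + ((m+2).choose 2 : ℂ) * β) * (1 - 2 * (k : ℂ) / ((m+2:ℕ) : ℂ)) + 1))
      * f (m+2-k) * f k) 0 (m+1) 1] at h1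
      have hI : Finset.Ico (0+1) (m+1+1) = Finset.Icc 1 (m+1) := by ext; simp
      rw [hI] at h1
      set S := Complex.sinh (((Real.log p : ℂ) / 2) * ((((m+2:ℕ) : ℂ) + ((m+2).choose 2 : ℂ) * β) - 1)) with hS
      have h4 : f (m+2) = (((m+2:ℕ):ℂ) * S)⁻¹ * ∑ k ∈ Finset.Icc 1 (m+1), (k:ℂ) * Complex.sinh (((Real.log p : ℂ) / 2) * ((((m+2:ℕ) : ℂ) + ((m+2).choose 2 : ℂ) * β) * (1 - 2 * (k : ℂ) / ((m+2:ℕ) : ℂ)) + 1))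
      * f (m+2-k) * f k := by
        rw [eq_inv_mul_iff_mul_eq₀ (mul_ne_zero hm hne)]
        linear_combination -h1
      rw [h4, Finset.mul_sum]
      refine Finset.sum_congr rfl fun k hk => ?_
      rw [Finset.mem_Icc] at hk
      rw [ih k (by omega) (by omega), ih (m+2-k) (by omega) (by omega), rho, if_neg hlog.ne', ← hS]
      have : ((m+2:ℕ):ℂ) = (m:ℂ) + 2 := by push_cast; rfl
      rw [this] at hm ⊢
      field_simp

lemma main (μ : Measure ℚ_[p]) [SigmaFinite μ] [μ.IsAddHaarMeasure] (hμ : μ (Zball p) = 1)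
    (N : ℕ) (hN : 2 ≤ N) (β : ℂ) (hβ : -2 / (N : ℝ) < β.re) :
    Integrable
      (fun x : Fin N → ℚ_[p] => ∏ q ∈ pairs N, (‖x q.1 - x q.2‖ : ℂ) ^ β)
      (Measure.pi fun _ => μ.restrict (Zball p)) ∧
    ZN p μ (Zball p) N β =
      (N.factorial : ℂ) * (p : ℂ) ^ ((N.choose 2 : ℂ) * β / 2) * F N (Real.log p) β := by
  have hprob : IsProbabilityMeasure (μ.restrict (Zball p)) := ⟨by simp [hμ]⟩
  have hN0 : (0:ℝ) < N := by exact_mod_cast (by omega : 0 < N)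
  have hNb : -2 < N * β.re := by rw [div_lt_iff₀ hN0] at hβ; linarith
  have hb : ∀ n : ℕ, n ≤ N → -2 < n * β.re := by
    intro n hn
    have hn' : (n:ℝ) ≤ N := by exact_mod_cast hn
    rcases le_or_gt 0 β.re with h | h
    · have : 0 ≤ n * β.re := by positivity
      linarith
    · have := mul_le_mul_of_nonpos_right hn' h.le
      linarith
  have hint := psb_int μ hμ β N hb
  have hp0 : (p:ℂ) ≠ 0 := by exact_mod_cast hp.out.ne_zero
  refine ⟨?_, ?_⟩
  · have := hint N le_rfl
    rwa [show GG p (psb β) (ι := Fin N) = _ from funext (GG_pairs β N)] at this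
  set ν := μ.restrict (Zball p) with hν
  have hZ : ZN p μ (Zball p) N β = N.factorial * cf ν (psb β) N 1 := by
    rw [cf, mul_div_cancel₀ _ (by exact_mod_cast N.factorial_ne_zero)]
    unfold ZN JJ
    simp only [Pi.one_apply, Finset.prod_const_one, one_mul, GG_pairs]
    rfl
  rw [hZ, mul_assoc]
  congr 1
  set f : ℕ → ℂ := fun k => ((p:ℂ) ^ ((k.choose 2 : ℂ) * β / 2))⁻¹ * cf ν (psb β) k 1 with hf
  have hne : ∀ k : ℕ, (p:ℂ) ^ ((k.choose 2 : ℂ) * β / 2) ≠ 0 := fun k => by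
    rw [pexp]; exact Complex.exp_ne_zero _
  have hf' : ∀ k, cf ν (psb β) k 1 = (p:ℂ) ^ ((k.choose 2 : ℂ) * β / 2) * f k := fun k => by
    rw [hf]; simp only; rw [mul_inv_cancel_left₀ (hne k)]
  rw [hf']
  congr 1
  refine f_eq_F β N hb f (by simp [hf, cf_zero]) (by simp [hf, cf_one]) ?_ N le_rfl
  intro n hn hn0
  refine sinh_rec β (fun k => cf ν (psb β) k 1) n hn0 ?_ f hf'
  have hq := quad μ hμ (psb_meas β) (psb_one β) n (fun m hm => hint m (hm.trans hn))
  simp only [cf_const _ (psb_scale (p := p) β)] at hq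
  exact hq
end

theorem statement_2 (p : ℕ) [Fact p.Prime]
    (μ : Measure ℚ_[p]) [SigmaFinite μ] [μ.IsAddHaarMeasure] (hμ : μ (Zball p) = 1)
    (N : ℕ) (hN : 2 ≤ N) (β : ℂ) (hβ : -2 / (N : ℝ) < β.re) :
    Integrable
      (fun x : Fin N → ℚ_[p] => ∏ q ∈ pairs N, (‖x q.1 - x q.2‖ : ℂ) ^ β)
      (Measure.pi fun _ => μ.restrict (Zball p)) ∧
    ZN p μ (Zball p) N β =
      (N.factorial : ℂ) * (p : ℂ) ^ ((N.choose 2 : ℂ) * β / 2) * F N (Real.log p) β := by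
  exact main μ hμ N hN β hβ

end LogCoulomb
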